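/- arXiv:2210.00362 — 2 statements merged into one kernel-verified Lean document; each statement's English description precedes it below -/
import Mathlib

section
/- In the kernel density setting, for every x ∈ [a, 1−a], | (1/h) ∫₀¹ φ((u−x)/h) du − 1 | ≤ (h/a) √(2/π) e^{−a²/(2h²)}. (This bounds the bias |E[ĝ(x)] − 1| of the kernel density estimator of the Uniform[0,1] density.) -/
/-!
After the substitution `t = (u - x) / h` the quantity inside the absolute value is the Gaussian mass
of `(-x/h, (1-x)/h]` minus one, that is, minus the sum of the two tails. Since `a ≤ x ≤ 1 - a`, the
symmetry of the density bounds each tail by the Gaussian mass of `(a/h, ∞)`, and the Mills-ratio bound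
`∫_{c}^∞ φ ≤ φ(c) / c` (`setIntegral_Ioi_gaussDensity_le`), applied with `c = a/h`, gives the estimate.
-/

noncomputable section

/-- The standard Gaussian density φ(t) = (2π)^{−1/2} e^{−t²/2}. -/
def gaussDensity (t : ℝ) : ℝ :=
  Real.exp (-t ^ 2 / 2) / Real.sqrt (2 * Real.pi)

end

open MeasureTheory Filter Topology

lemma gaussDensity_nonneg (t : ℝ) : 0 ≤ gaussDensity t := by
  unfold gaussDensity; positivity

lemma gaussDensity_neg (t : ℝ) : gaussDensity (-t) = gaussDensity t := by
  simp [gaussDensity]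

lemma gaussDensity_eq :
    gaussDensity = fun t => Real.exp (-(1 / 2) * t ^ 2) / Real.sqrt (2 * Real.pi) := by
  funext t
  unfold gaussDensity
  congr 2
  ring

lemma integrable_gaussDensity : Integrable gaussDensity := by
  rw [gaussDensity_eq]
  exact (integrable_exp_neg_mul_sq (by norm_num)).div_const _

lemma integral_gaussDensity : ∫ t, gaussDensity t = 1 := by
  rw [gaussDensity_eq, integral_div, integral_gaussian]
  rw [show Real.pi / (1 / 2) = 2 * Real.pi by ring]
  exact div_self (by positivity)

lemma hasDerivAt_neg_gaussDensity (t : ℝ) :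
    HasDerivAt (fun s => -gaussDensity s) (t * gaussDensity t) t := by
  have h1 : HasDerivAt (fun s : ℝ => -s ^ 2 / 2) (-t) t := by
    refine (((hasDerivAt_pow 2 t).fun_neg).div_const 2).congr_deriv ?_
    norm_num
    ring
  refine (h1.exp.div_const (Real.sqrt (2 * Real.pi))).fun_neg.congr_deriv ?_
  unfold gaussDensity; ring

lemma tendsto_gaussDensity_atTop : Tendsto gaussDensity atTop (𝓝 0) := by
  have h1 : Tendsto (fun t : ℝ => -t ^ 2 / 2) atTop atBot := by
    have h2 : Tendsto (fun t : ℝ => t ^ 2 / 2) atTop atTop :=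
      (tendsto_pow_atTop two_ne_zero).atTop_div_const (by norm_num)
    refine (tendsto_neg_atTop_atBot.comp h2).congr fun t => ?_
    simp only [Function.comp]; ring
  have h3 := (Real.tendsto_exp_atBot.comp h1).div_const (Real.sqrt (2 * Real.pi))
  rw [zero_div] at h3
  exact h3

/-- Mills-ratio bound: on `(c, ∞)` one has `1 ≤ t / c`, and `t φ(t)` is the derivative of `-φ`. -/
lemma setIntegral_Ioi_gaussDensity_le {c : ℝ} (hc : 0 < c) :
    ∫ t in Set.Ioi c, gaussDensity t ≤ gaussDensity c / c := by
  have hlim : Tendsto (fun s => -gaussDensity s) atTop (𝓝 0) := by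
    simpa using tendsto_gaussDensity_atTop.neg
  have hpos : ∀ t ∈ Set.Ioi c, 0 ≤ t * gaussDensity t := fun t ht =>
    mul_nonneg (hc.le.trans (le_of_lt ht)) (gaussDensity_nonneg t)
  have hint : IntegrableOn (fun t => t * gaussDensity t) (Set.Ioi c) :=
    integrableOn_Ioi_deriv_of_nonneg' (fun t _ => hasDerivAt_neg_gaussDensity t) hpos hlim
  have hval : ∫ t in Set.Ioi c, t * gaussDensity t = gaussDensity c := by
    rw [integral_Ioi_of_hasDerivAt_of_nonneg'
      (fun t _ => hasDerivAt_neg_gaussDensity t) hpos hlim]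
    ring
  calc ∫ t in Set.Ioi c, gaussDensity t
      ≤ ∫ t in Set.Ioi c, t * gaussDensity t / c := by
        refine setIntegral_mono_on integrable_gaussDensity.integrableOn (hint.div_const c)
          measurableSet_Ioi fun t ht => ?_
        rw [le_div_iff₀ hc, mul_comm]
        exact mul_le_mul_of_nonneg_right (le_of_lt ht) (gaussDensity_nonneg t)
    _ = gaussDensity c / c := by rw [integral_div, hval]

/-- A tail starting beyond `c` is no larger than the tail starting at `c`. -/
lemma setIntegral_Ioi_gaussDensity_le_of_le {c d : ℝ} (hc : 0 < c) (hcd : c ≤ d) :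
    ∫ t in Set.Ioi d, gaussDensity t ≤ gaussDensity c / c :=
  (setIntegral_mono_set integrable_gaussDensity.integrableOn
    (Eventually.of_forall gaussDensity_nonneg)
    (Set.Ioi_subset_Ioi hcd).eventuallyLE).trans (setIntegral_Ioi_gaussDensity_le hc)

/-- The Gaussian mass of `(-p, q]` is one minus the two tails, the left one reflected. -/
lemma intervalIntegral_gaussDensity (p q : ℝ) :
    ∫ t in (-p)..q, gaussDensity t =
      1 - (∫ t in Set.Ioi p, gaussDensity t) - ∫ t in Set.Ioi q, gaussDensity t := by
  have hi := integrable_gaussDensity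
  have h1 : (∫ t in Set.Iic q, gaussDensity t) - ∫ t in Set.Iic (-p), gaussDensity t =
      ∫ t in (-p)..q, gaussDensity t :=
    intervalIntegral.integral_Iic_sub_Iic hi.integrableOn hi.integrableOn
  have h2 : (∫ t in Set.Iic q, gaussDensity t) + ∫ t in Set.Ioi q, gaussDensity t = 1 := by
    rw [intervalIntegral.integral_Iic_add_Ioi hi.integrableOn hi.integrableOn,
      integral_gaussDensity]
  have h3 : ∫ t in Set.Iic (-p), gaussDensity t = ∫ t in Set.Ioi p, gaussDensity t := by
    have := integral_comp_neg_Iic (-p) gaussDensity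
    simpa only [gaussDensity_neg, neg_neg] using this
  linarith

/-- Bias bound for the Gaussian kernel density estimator of the Uniform[0,1]
density, away from the boundary. -/
theorem kde_bias_bound (a h : ℝ) (ha : a ∈ Set.Ioc 0 (1/4 : ℝ))
    (hh : h ∈ Set.Ioc 0 (1 : ℝ)) (x : ℝ) (hx : x ∈ Set.Icc a (1 - a)) :
    |(1 / h) * (∫ u in (0:ℝ)..1, gaussDensity ((u - x) / h)) - 1| ≤
      (h / a) * Real.sqrt (2 / Real.pi) * Real.exp (-a ^ 2 / (2 * h ^ 2)) := by
  obtain ⟨ha0, -⟩ := ha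
  obtain ⟨hh0, -⟩ := hh
  obtain ⟨hx1, hx2⟩ := hx
  have hsub : (1 / h) * (∫ u in (0:ℝ)..1, gaussDensity ((u - x) / h)) =
      ∫ t in (-(x / h))..((1 - x) / h), gaussDensity t := by
    have := intervalIntegral.inv_smul_integral_comp_div_sub (a := 0) (b := 1) gaussDensity h (x / h)
    simpa only [smul_eq_mul, ← sub_div, zero_sub, neg_div, inv_eq_one_div] using this
  have hc : 0 < a / h := div_pos ha0 hh0
  have hl := setIntegral_Ioi_gaussDensity_le_of_le hc (d := x / h) (by gcongr)
  have hr := setIntegral_Ioi_gaussDensity_le_of_le hc (d := (1 - x) / h) (by gcongr; linarith)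
  have hl0 : 0 ≤ ∫ t in Set.Ioi (x / h), gaussDensity t :=
    integral_nonneg gaussDensity_nonneg
  have hr0 : 0 ≤ ∫ t in Set.Ioi ((1 - x) / h), gaussDensity t :=
    integral_nonneg gaussDensity_nonneg
  have hs : Real.sqrt (2 / Real.pi) = 2 / Real.sqrt (2 * Real.pi) := by
    rw [show 2 / Real.pi = 2 ^ 2 / (2 * Real.pi) by field_simp,
      Real.sqrt_div (by positivity), Real.sqrt_sq (by norm_num)]
  have hfin : (h / a) * Real.sqrt (2 / Real.pi) * Real.exp (-a ^ 2 / (2 * h ^ 2)) =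
      2 * (gaussDensity (a / h) / (a / h)) := by
    have he : -(a / h) ^ 2 / 2 = -a ^ 2 / (2 * h ^ 2) := by field_simp
    rw [hs, gaussDensity, he]
    field_simp
  rw [hsub, intervalIntegral_gaussDensity, hfin, abs_le]
  constructor <;> linarith
end

section
/- For every real λ with 0 < λ < 1, Σ_{i ∈ ℤ} exp( −(πe + 2πi)² / (4λ) ) ≤ (9/4) exp( −5/(4λ) ), where e is Euler's number and the sum is over all integers i. -/
/-!
Put `j = i + 1`, so that `π e + 2 π i = π (e - 2 + 2 j)`. The term `j = 0` dominates, since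
`π² (e - 2)² ≈ 5.09 > 5`, and the exponents grow at least linearly around it:
`π² (e - 2 + 2 j)² ≥ 5 + 4 |j|` (`exponent_lower_bound`). As `0 < λ < 1`, each term is therefore
at most `exp (-5 / (4 λ)) * exp (-1) ^ |j|`, and the two-sided geometric series
`∑_j r ^ |j| = (1 + r) / (1 - r)` (`hasSum_pow_natAbs`) is at most `9 / 4` for
`r = exp (-1) ≤ 5 / 13`.
-/

theorem exponent_lower_bound (j : ℤ) :
    5 + 4 * (j.natAbs : ℝ) ≤
      (Real.pi * Real.exp 1 + 2 * Real.pi * ((j : ℝ) - 1)) ^ 2 := by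
  have he1 := Real.exp_one_gt_d9
  have he2 := Real.exp_one_lt_d9
  have hp := Real.pi_gt_d2
  obtain ⟨d, hd⟩ : ∃ d, d = Real.exp 1 - 2 := ⟨_, rfl⟩
  have hd1 : 0.718 < d := by linarith
  have hd2 : d < 0.72 := by linarith
  have hpi : 9.85 ≤ Real.pi ^ 2 := by nlinarith
  have hpd : 5 ≤ Real.pi ^ 2 * d ^ 2 := by
    have h : 2.25 ≤ Real.pi * d := by nlinarith
    nlinarith
  have hnat : (j.natAbs : ℝ) = |(j : ℝ)| := by
    rw [Nat.cast_natAbs, Int.cast_abs]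
  -- The cross term `d j` costs at most `d |j|`, and `j² ≥ |j|` because `j` is an integer.
  have hj : |(j : ℝ)| ≤ (j : ℝ) ^ 2 := by
    have h : |j| ≤ j ^ 2 := by
      rw [Int.abs_eq_natAbs]
      exact Int.natAbs_le_self_sq j
    exact_mod_cast h
  have hcross : 0.28 * |(j : ℝ)| ≤ (j : ℝ) ^ 2 + d * j := by
    have h := neg_abs_le (j : ℝ)
    have h0 := abs_nonneg (j : ℝ)
    nlinarith
  have hlin : |(j : ℝ)| ≤ Real.pi ^ 2 * ((j : ℝ) ^ 2 + d * j) := by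
    have h0 := abs_nonneg (j : ℝ)
    nlinarith
  have hexp : (Real.pi * Real.exp 1 + 2 * Real.pi * ((j : ℝ) - 1)) ^ 2 =
      Real.pi ^ 2 * d ^ 2 + 4 * (Real.pi ^ 2 * ((j : ℝ) ^ 2 + d * j)) := by
    rw [hd]; ring
  rw [hexp, hnat]
  linarith

theorem hasSum_pow_natAbs {r : ℝ} (h0 : 0 ≤ r) (h1 : r < 1) :
    HasSum (fun j : ℤ => r ^ j.natAbs) ((1 + r) / (1 - r)) := by
  have hg := hasSum_geometric_of_lt_one h0 h1
  have hs : HasSum (fun j : ℤ => r ^ j.natAbs) ((1 - r)⁻¹ + r * (1 - r)⁻¹) := by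
    refine HasSum.of_nat_of_neg_add_one (by simpa using hg) ?_
    have h : ∀ n : ℕ, r ^ (-((n : ℤ) + 1)).natAbs = r * r ^ n := by
      intro n
      have hn : (-((n : ℤ) + 1)).natAbs = n + 1 := by omega
      rw [hn, pow_succ']
    simpa only [h] using hg.mul_left r
  convert hs using 1
  ring

/-- A theta-function-type series bound (from the proof of Lemma 3.1):
for 0 < λ < 1, ∑_{i ∈ ℤ} exp(−(πe + 2πi)²/(4λ)) ≤ (9/4) exp(−5/(4λ)). -/
theorem theta_series_bound (lam : ℝ) (hlam0 : 0 < lam) (hlam1 : lam < 1) :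
    ∑' i : ℤ, Real.exp (-(Real.pi * Real.exp 1 + 2 * Real.pi * i) ^ 2 / (4 * lam)) ≤
      9 / 4 * Real.exp (-5 / (4 * lam)) := by
  have hr : Real.exp (-1) ≤ 5 / 13 := by
    rw [Real.exp_neg, inv_le_comm₀ (Real.exp_pos 1) (by norm_num)]
    have := Real.exp_one_gt_d9
    norm_num
    linarith
  have hS := (hasSum_pow_natAbs (Real.exp_pos (-1)).le (by linarith)).mul_right
    (Real.exp (-5 / (4 * lam)))
  have hterm : ∀ j : ℤ,
      Real.exp (-(Real.pi * Real.exp 1 + 2 * Real.pi * ((j - 1 : ℤ) : ℝ)) ^ 2 / (4 * lam)) ≤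
        Real.exp (-1) ^ j.natAbs * Real.exp (-5 / (4 * lam)) := by
    intro j
    rw [← Real.exp_nat_mul, ← Real.exp_add, Real.exp_le_exp, div_le_iff₀ (by positivity)]
    have hb := exponent_lower_bound j
    have hn : (0 : ℝ) ≤ j.natAbs := Nat.cast_nonneg _
    have hm : (j.natAbs : ℝ) * lam ≤ j.natAbs := mul_le_of_le_one_right hn hlam1.le
    have he : ((j.natAbs : ℝ) * -1 + -5 / (4 * lam)) * (4 * lam) =
        -(4 * (j.natAbs * lam)) - 5 := by
      field_simp
      ring
    rw [he]
    push_cast at hb ⊢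
    linarith
  rw [← (Equiv.subRight (1 : ℤ)).tsum_eq]
  have hsum := Summable.of_nonneg_of_le (fun j => (Real.exp_pos _).le) hterm hS.summable
  refine (hsum.tsum_le_tsum hterm hS.summable).trans ?_
  rw [hS.tsum_eq]
  refine mul_le_mul_of_nonneg_right ?_ (Real.exp_pos _).le
  rw [div_le_iff₀ (by linarith)]
  linarith
end
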